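/- The greedy assignment z is well defined and feasible: Ť_ℓ ≤ z_ℓ ≤ T̂_ℓ for every ℓ ∈ {1, …, m}, and Σ_{ℓ=1}^m z_ℓ = 1. In particular, the feasible set {z' : Ť_ℓ ≤ z'_ℓ ≤ T̂_ℓ for all ℓ and Σ_ℓ z'_ℓ = 1} is nonempty, so every row of an interval-valued Markov chain admits at least one instantiation as a probability distribution. -/

import Mathlib

theorem greedy_aux (m : ℕ) : ∀ (c : ℝ) (Tlo Thi z : Fin m → ℝ)
    (_ : ∀ ℓ, Tlo ℓ ≤ Thi ℓ)
    (_ : ∑ ℓ, Tlo ℓ ≤ c) (_ : c ≤ ∑ ℓ, Thi ℓ)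
    (_ : ∀ ℓ, z ℓ = min (Thi ℓ)
      (c - (∑ k, if k < ℓ then z k else 0) - ∑ k, if ℓ < k then Tlo k else 0)),
    (∀ ℓ, Tlo ℓ ≤ z ℓ ∧ z ℓ ≤ Thi ℓ) ∧ ∑ ℓ, z ℓ = c := by
  induction m with
  | zero =>
    intro c Tlo Thi z _ h1 h2 _
    simp at h1 h2 ⊢
    linarith
  | succ n ih =>
    intro c Tlo Thi z hle h1 h2 hz
    rw [Fin.sum_univ_succ] at h1 h2
    have hz0 := hz 0
    simp [Fin.sum_univ_succ] at hz0
    have hle0 := hle 0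
    have htail : ∑ i : Fin n, Tlo i.succ ≤ ∑ i : Fin n, Thi i.succ :=
      Finset.sum_le_sum fun i _ => hle i.succ
    have hb : z 0 ≤ Thi 0 := hz0 ▸ min_le_left _ _
    have hb2 : z 0 ≤ c - ∑ i : Fin n, Tlo i.succ := hz0 ▸ min_le_right _ _
    have hb3 : Tlo 0 ≤ z 0 := by
      rw [hz0]; exact le_min hle0 (by linarith)
    obtain ⟨hA, hB⟩ := ih (c - z 0) (fun i => Tlo i.succ) (fun i => Thi i.succ)
      (fun i => z i.succ) (fun i => hle i.succ) (by linarith)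
      (by
        rcases min_choice (Thi 0) (c - ∑ i : Fin n, Tlo i.succ) with h | h <;>
          rw [h] at hz0 <;> linarith)
      (by
        intro i
        have := hz i.succ
        simp only [Fin.sum_univ_succ, Fin.succ_lt_succ_iff, Fin.succ_pos, if_true,
          Fin.not_lt_zero, if_false, zero_add] at this
        rw [this]
        congr 1
        ring)
    refine ⟨fun i => Fin.cases ⟨hb3, hb⟩ hA i, ?_⟩
    rw [Fin.sum_univ_succ, hB]
    ring

/-- The greedy probability assignment `z` of the interval value-iteration
algorithm is feasible: it respects the interval bounds and sums to one.
In particular, the feasible set of an IMC row is nonempty. -/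
theorem greedy_assignment_feasible
    (m : ℕ) (hm : 1 ≤ m)
    (Tlo Thi : Fin m → ℝ)
    (h0 : ∀ ℓ, 0 ≤ Tlo ℓ) (hle : ∀ ℓ, Tlo ℓ ≤ Thi ℓ)
    (hsumlo : ∑ ℓ, Tlo ℓ ≤ 1) (hsumhi : 1 ≤ ∑ ℓ, Thi ℓ)
    (z : Fin m → ℝ)
    (hz : ∀ ℓ, z ℓ = min (Thi ℓ)
      (1 - ∑ k ∈ Finset.Iio ℓ, z k - ∑ k ∈ Finset.Ioi ℓ, Tlo k)) :
    ((∀ ℓ, Tlo ℓ ≤ z ℓ ∧ z ℓ ≤ Thi ℓ) ∧ ∑ ℓ, z ℓ = 1) ∧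
    ∃ z' : Fin m → ℝ, (∀ ℓ, Tlo ℓ ≤ z' ℓ ∧ z' ℓ ≤ Thi ℓ) ∧ ∑ ℓ, z' ℓ = 1 := by
  have key : (∀ ℓ, Tlo ℓ ≤ z ℓ ∧ z ℓ ≤ Thi ℓ) ∧ ∑ ℓ, z ℓ = 1 := by
    refine greedy_aux m 1 Tlo Thi z hle hsumlo hsumhi fun ℓ => ?_
    have e1 : Finset.Iio ℓ = Finset.univ.filter (fun k => k < ℓ) := by ext; simp
    have e2 : Finset.Ioi ℓ = Finset.univ.filter (fun k => ℓ < k) := by ext; simp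
    rw [← Finset.sum_filter, ← Finset.sum_filter, ← e1, ← e2]
    exact hz ℓ
  exact ⟨key, z, key⟩
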